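/- arXiv:2604.05508 — 5 statements merged into one kernel-verified Lean document; each statement's English description precedes it below -/
import Mathlib

section
/- Let E be a finite-dimensional real normed space, let K ⊆ E be a topologically closed set that is closed under multiplication by nonnegative real scalars (a closed cone), and let W be a linear subspace of E with K ∩ W = {0}. Then there exists κ > 0 such that for every x ∈ K, κ · ‖x‖ ≤ Metric.infDist x W. -/
/-!
The function `x ↦ Metric.infDist x W` is continuous, and it is positive on the compact set
`K ∩ sphere 0 1`, because `W` is closed and `K` meets `W` only at `0`. Hence it is bounded below
there by some `κ > 0`. Since `K` is a cone and `W` is a subspace, rescaling a nonzero `x ∈ K` to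
norm one transfers this bound to all of `K`.
-/

/-- **Transversality bound for closed cones:** if a closed cone `K` in a
finite-dimensional real normed space meets a subspace `W` only at `0`, then the
distance from any point of `K` to `W` is at least proportional to its norm. -/
theorem infDist_ge_of_cone_transverse {E : Type*}
    [NormedAddCommGroup E] [NormedSpace ℝ E] [FiniteDimensional ℝ E]
    (K : Set E) (hKclosed : IsClosed K)
    (hKcone : ∀ t : ℝ, 0 ≤ t → ∀ x ∈ K, t • x ∈ K)
    (W : Submodule ℝ E) (hKW : K ∩ (W : Set E) = {0}) :
    ∃ κ : ℝ, 0 < κ ∧ ∀ x ∈ K, κ * ‖x‖ ≤ Metric.infDist x (W : Set E) := by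
  have : ProperSpace E := FiniteDimensional.proper ℝ E
  have hne : (W : Set E).Nonempty := ⟨0, W.zero_mem⟩
  have hcomp : IsCompact (K ∩ Metric.sphere (0 : E) 1) :=
    (isCompact_sphere (0 : E) 1).inter_left hKclosed
  have hpos : ∀ u ∈ K ∩ Metric.sphere (0 : E) 1, 0 < Metric.infDist u (W : Set E) := by
    rintro u ⟨huK, hu⟩
    refine (W.closed_of_finiteDimensional.notMem_iff_infDist_pos hne).1 fun huW => ?_
    have h0 : u ∈ ({0} : Set E) := hKW ▸ ⟨huK, huW⟩
    rw [Set.mem_singleton_iff] at h0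
    simp [h0] at hu
  obtain ⟨κ, hκ, hmin⟩ := hcomp.exists_forall_le'
    (Metric.continuous_infDist_pt (W : Set E)).continuousOn hpos
  refine ⟨κ, hκ, fun x hx => ?_⟩
  rcases eq_or_ne x 0 with rfl | hx0
  · simpa using Metric.infDist_nonneg
  have hnorm : 0 < ‖x‖ := norm_pos_iff.2 hx0
  refine (Metric.le_infDist hne).2 fun w hw => ?_
  have hu : ‖x‖⁻¹ • x ∈ K ∩ Metric.sphere (0 : E) 1 :=
    ⟨hKcone _ (inv_nonneg.2 hnorm.le) x hx, by simp [norm_smul, hnorm.ne']⟩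
  have h : κ ≤ ‖x‖⁻¹ * dist x w := calc
    κ ≤ Metric.infDist (‖x‖⁻¹ • x) (W : Set E) := hmin _ hu
    _ ≤ dist (‖x‖⁻¹ • x) (‖x‖⁻¹ • w) := Metric.infDist_le_dist_of_mem (W.smul_mem _ hw)
    _ = ‖x‖⁻¹ * dist x w := by rw [dist_smul₀]; simp
  calc κ * ‖x‖ ≤ ‖x‖⁻¹ * dist x w * ‖x‖ := by gcongr
    _ = dist x w := by field_simp
end

section
/- Let d ≥ 1 and let g₁, …, g_m ∈ Matrix (Fin d) (Fin d) ℂ be pairwise commuting Hermitian matrices with gᵢ² = 1 for all i. Let ψ be a unit vector such that gᵢ.mulVec ψ = ψ for all i, and suppose the joint +1 eigenspace is one-dimensional: every vector φ with gᵢ.mulVec φ = φ for all i is a scalar multiple of ψ. Then the matrix ∑_{i=1}^m (1/2)·(1 − gᵢ) − (1 − |ψ⟩⟨ψ|) is positive semidefinite. -/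
/-!
Each `Pᵢ = (1 + gᵢ)/2` is an orthogonal projection, these projections commute, and
`(1 - gᵢ)/2 = 1 - Pᵢ`. For commuting orthogonal projections `P`, `Q` one has
`(1 - P) + (1 - Q) - (1 - P Q) = (1 - P)(1 - Q)`, again an orthogonal projection and hence positive
semidefinite; by induction `∑ᵢ (1 - Pᵢ) ⪰ 1 - ∏ᵢ Pᵢ` (`exists_joint_projection`). The product is the
projection onto the joint `+1` eigenspace, which is the line through `ψ`, so it equals `|ψ⟩⟨ψ|`
(`eq_vecMulVec_of_range_le`).
-/

open Matrix BigOperators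
open scoped ComplexOrder

noncomputable section

/-- An orthogonal projection is positive semidefinite, because it equals `Aᴴ * A`. -/
lemma posSemidef_of_isHermitian_of_idem {n : Type*} [Fintype n]
    {A : Matrix n n ℂ} (hA : A.IsHermitian) (hI : A * A = A) : A.PosSemidef := by
  have h := Matrix.posSemidef_conjTranspose_mul_self A
  rwa [hA.eq, hI] at h

/-- The matrix `Q` produced here is `∏ i ∈ s, (1 + g i) / 2`. It is described only by the properties
that carry the induction; commutation with every `g j` is what makes the next product a
projection. -/
lemma exists_joint_projection {n ι : Type*} [Fintype n] [DecidableEq n]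
    (g : ι → Matrix n n ℂ)
    (hHerm : ∀ i, (g i).IsHermitian)
    (hcomm : ∀ i j, Commute (g i) (g j))
    (hsq : ∀ i, g i * g i = 1)
    (ψ : n → ℂ) (hstab : ∀ i, (g i).mulVec ψ = ψ) (s : Finset ι) :
    ∃ Q : Matrix n n ℂ, Q.IsHermitian ∧ Q * Q = Q ∧ (∀ j, Commute (g j) Q) ∧
      (∀ i ∈ s, g i * Q = Q) ∧ Q.mulVec ψ = ψ ∧
      ((∑ i ∈ s, (2⁻¹ : ℂ) • ((1 : Matrix n n ℂ) - g i)) - (1 - Q)).PosSemidef := by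
  classical
  induction s using Finset.induction_on with
  | empty =>
    refine ⟨1, Matrix.isHermitian_one, by simp, fun j => Commute.one_right _, by simp, by simp, ?_⟩
    simpa using Matrix.PosSemidef.zero
  | insert a s ha ih =>
    obtain ⟨Q, hQ, hQQ, hQc, hQs, hQψ, hpos⟩ := ih
    obtain ⟨P, hP⟩ : ∃ P : Matrix n n ℂ, P = (2⁻¹ : ℂ) • (1 + g a) := ⟨_, rfl⟩
    have hPH : P.IsHermitian := by
      rw [hP, Matrix.IsHermitian, Matrix.conjTranspose_smul, Matrix.conjTranspose_add,
        (hHerm a).eq]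
      simp
    have hgP : g a * P = P := by
      rw [hP, mul_smul_comm, mul_add, hsq, mul_one, add_comm]
    have hPP : P * P = P := by
      nth_rewrite 1 [hP]
      rw [smul_mul_assoc, add_mul, one_mul, hgP, ← two_smul ℂ P, smul_smul]
      norm_num
    have hPc : ∀ M, Commute (g a) M → Commute P M := fun M hM => by
      rw [hP]
      exact ((Commute.one_left M).add_left hM).smul_left _
    have hPQ : Commute P Q := hPc Q (hQc a)
    refine ⟨P * Q, ?_, ?_, ?_, ?_, ?_, ?_⟩
    · rw [Matrix.IsHermitian, Matrix.conjTranspose_mul, hPH.eq, hQ.eq, hPQ.eq]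
    · rw [hPQ.symm.mul_mul_mul_comm, hPP, hQQ]
    · exact fun j => ((hPc _ (hcomm a j)).symm).mul_right (hQc j)
    · intro i hi
      rcases Finset.mem_insert.1 hi with rfl | hi
      · rw [← mul_assoc, hgP]
      · rw [hPQ.eq, ← mul_assoc, hQs i hi]
    · rw [← Matrix.mulVec_mulVec, hQψ, hP, Matrix.smul_mulVec, Matrix.add_mulVec,
        Matrix.one_mulVec, hstab, ← two_smul ℂ ψ, smul_smul]
      norm_num
    · have hc : Commute (1 - P) (1 - Q) :=
        ((Commute.one_left _).sub_left ((Commute.one_right _).sub_right hPQ))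
      have hR : ((1 - P) * (1 - Q)).PosSemidef := by
        have h1 : (1 - P).IsHermitian := Matrix.isHermitian_one.sub hPH
        have h2 : (1 - Q).IsHermitian := Matrix.isHermitian_one.sub hQ
        apply posSemidef_of_isHermitian_of_idem
        · rw [Matrix.IsHermitian, Matrix.conjTranspose_mul, h1.eq, h2.eq, hc.eq]
        · have e1 : (1 - P) * (1 - P) = 1 - P := by
            rw [sub_mul, one_mul, mul_sub, mul_one, hPP, sub_self, sub_zero]
          have e2 : (1 - Q) * (1 - Q) = 1 - Q := by
            rw [sub_mul, one_mul, mul_sub, mul_one, hQQ, sub_self, sub_zero]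
          rw [hc.symm.mul_mul_mul_comm, e1, e2]
      have hga : (2⁻¹ : ℂ) • ((1 : Matrix n n ℂ) - g a) = 1 - P := by
        rw [hP]; module
      rw [Finset.sum_insert ha, hga]
      convert hpos.add hR using 1
      noncomm_ring

/-- A Hermitian matrix that fixes the unit vector `ψ` and has range in the line spanned by `ψ` is
`|ψ⟩⟨ψ|`. -/
lemma eq_vecMulVec_of_range_le {n : Type*} [Fintype n] [DecidableEq n]
    {Q : Matrix n n ℂ} (hQ : Q.IsHermitian) {ψ : n → ℂ} (hψ : star ψ ⬝ᵥ ψ = 1)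
    (hQψ : Q.mulVec ψ = ψ) (hrange : ∀ x, ∃ c : ℂ, Q.mulVec x = c • ψ) :
    Q = Matrix.vecMulVec ψ (star ψ) := by
  refine Matrix.ext_of_mulVec_single fun i => ?_
  generalize (Pi.single i 1 : n → ℂ) = x
  obtain ⟨c, hc⟩ := hrange x
  -- Pairing `Q x = c ψ` with `ψ` and moving `Q` to the other side identifies `c` as `⟨ψ, x⟩`.
  have hcx : c = star ψ ⬝ᵥ x := by
    have h : star ψ ⬝ᵥ Q.mulVec x = star ψ ⬝ᵥ x := by
      have h' : star ψ ᵥ* Q = star ψ := by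
        conv_rhs => rw [← hQψ, Matrix.star_mulVec, hQ.eq]
      rw [Matrix.dotProduct_mulVec, h']
    rw [← h, hc, dotProduct_smul, hψ, smul_eq_mul, mul_one]
  rw [hc, Matrix.vecMulVec_mulVec, hcx]
  simp

/-- **Spectral gap of commuting stabilizer parent Hamiltonians:** if pairwise
commuting Hermitian involutions `gᵢ` have a one-dimensional joint `+1`
eigenspace spanned by the unit vector `ψ`, then
`∑ᵢ (1 − gᵢ)/2 ⪰ 1 − |ψ⟩⟨ψ|`. -/
theorem stabilizer_hamiltonian_gap {d m : ℕ} (hd : 1 ≤ d) (hm : 1 ≤ m)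
    (g : Fin m → Matrix (Fin d) (Fin d) ℂ)
    (hHerm : ∀ i, (g i).IsHermitian)
    (hcomm : ∀ i j, Commute (g i) (g j))
    (hsq : ∀ i, g i * g i = 1)
    (ψ : Fin d → ℂ) (hψ : star ψ ⬝ᵥ ψ = 1)
    (hstab : ∀ i, (g i).mulVec ψ = ψ)
    (huniq : ∀ φ : Fin d → ℂ, (∀ i, (g i).mulVec φ = φ) → ∃ c : ℂ, φ = c • ψ) :
    ((∑ i : Fin m, (2⁻¹ : ℂ) • ((1 : Matrix (Fin d) (Fin d) ℂ) - g i)) -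
        ((1 : Matrix (Fin d) (Fin d) ℂ) - Matrix.vecMulVec ψ (star ψ))).PosSemidef := by
  obtain ⟨Q, hQ, -, -, hQs, hQψ, hpos⟩ :=
    exists_joint_projection g hHerm hcomm hsq ψ hstab Finset.univ
  have hQeq : Q = Matrix.vecMulVec ψ (star ψ) :=
    eq_vecMulVec_of_range_le hQ hψ hQψ fun x => huniq _ fun i => by
      rw [Matrix.mulVec_mulVec, hQs i (Finset.mem_univ i)]
  rwa [← hQeq]

end
end

section
/- Let d ≥ 1, let ψ be a unit vector in Fin d → ℂ, and set ρ := |ψ⟩⟨ψ| and P₀ := 1 − ρ. Let H ∈ Matrix (Fin d) (Fin d) ℂ be positive semidefinite with H.mulVec ψ = 0 and with H − P₀ positive semidefinite. If X is a Hermitian matrix such that trace (H * X) = 0 and P₀ * X * P₀ is positive semidefinite, then P₀ * X * P₀ = 0. -/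
/-!
Write `P = 1 − |ψ⟩⟨ψ|` and `Y = P X P`. Since `H` is Hermitian and kills `ψ`, it satisfies
`P H = H = H P`, so cyclicity of the trace gives `tr (H Y) = tr (H X) = 0`. The trace of a product
of two positive semidefinite matrices is nonnegative, hence `0 ≤ tr ((H − P) Y) = − tr (P Y)`, and
`P Y = Y` because `P` is idempotent. So `Y` is positive semidefinite with `tr Y ≤ 0`, which
forces `Y = 0`.
-/

open Matrix BigOperators
open scoped ComplexOrder

noncomputable section

open scoped MatrixOrder in
/-- Factoring `B = Cᴴ C` turns `tr (A B)` into the trace of the positive semidefinite `C A Cᴴ`. -/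
lemma trace_mul_nonneg_of_posSemidef {d : ℕ} {A B : Matrix (Fin d) (Fin d) ℂ}
    (hA : A.PosSemidef) (hB : B.PosSemidef) : 0 ≤ (A * B).trace := by
  obtain ⟨C, rfl⟩ := CStarAlgebra.nonneg_iff_eq_star_mul_self.mp hB.nonneg
  have h := (hA.mul_mul_conjTranspose_same C).trace_nonneg
  rwa [Matrix.mul_assoc, Matrix.trace_mul_comm, Matrix.mul_assoc] at h

/-- **Simplified linear certification for gapped pure states:** if `H ⪰ 0`
annihilates the unit vector `ψ` and `H ⪰ P₀ = 1 − |ψ⟩⟨ψ|`, then any Hermitian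
`X` with `tr(HX) = 0` and `P₀ X P₀ ⪰ 0` satisfies `P₀ X P₀ = 0`. -/
theorem compression_eq_zero_of_trace_eq_zero {d : ℕ} (hd : 1 ≤ d)
    (ψ : Fin d → ℂ) (hψ : star ψ ⬝ᵥ ψ = 1)
    (H : Matrix (Fin d) (Fin d) ℂ) (hH : H.PosSemidef)
    (hHψ : H.mulVec ψ = 0)
    (hgap : (H - ((1 : Matrix (Fin d) (Fin d) ℂ) - Matrix.vecMulVec ψ (star ψ))).PosSemidef)
    (X : Matrix (Fin d) (Fin d) ℂ) (hX : X.IsHermitian)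
    (htr : (H * X).trace = 0)
    (hpsd : (((1 : Matrix (Fin d) (Fin d) ℂ) - Matrix.vecMulVec ψ (star ψ)) * X *
        ((1 : Matrix (Fin d) (Fin d) ℂ) - Matrix.vecMulVec ψ (star ψ))).PosSemidef) :
    ((1 : Matrix (Fin d) (Fin d) ℂ) - Matrix.vecMulVec ψ (star ψ)) * X *
        ((1 : Matrix (Fin d) (Fin d) ℂ) - Matrix.vecMulVec ψ (star ψ)) = 0 := by
  have hHρ : H * vecMulVec ψ (star ψ) = 0 := by
    rw [mul_vecMulVec, hHψ, zero_vecMulVec]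
  have hρH : vecMulVec ψ (star ψ) * H = 0 := by
    have h := congrArg conjTranspose hHρ
    rwa [conjTranspose_mul, conjTranspose_vecMulVec, star_star, hH.isHermitian.eq,
      conjTranspose_zero] at h
  have hρρ : vecMulVec ψ (star ψ) * vecMulVec ψ (star ψ) = vecMulVec ψ (star ψ) := by
    rw [vecMulVec_mul_vecMulVec, hψ, one_smul]
  have hHP : H * (1 - vecMulVec ψ (star ψ)) = H := by rw [mul_sub, hHρ, mul_one, sub_zero]
  have hPH : (1 - vecMulVec ψ (star ψ)) * H = H := by rw [sub_mul, hρH, one_mul, sub_zero]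
  have hPP : (1 - vecMulVec ψ (star ψ)) * (1 - vecMulVec ψ (star ψ))
      = 1 - vecMulVec ψ (star ψ) := by
    rw [mul_sub, mul_one, sub_mul, one_mul, hρρ, sub_self, sub_zero]
  generalize (1 : Matrix (Fin d) (Fin d) ℂ) - vecMulVec ψ (star ψ) = P at *
  have hHY : (H * (P * X * P)).trace = 0 := by
    rw [← Matrix.mul_assoc, ← Matrix.mul_assoc, hHP, Matrix.trace_mul_comm, ← Matrix.mul_assoc,
      hPH, htr]
  have hPY : P * (P * X * P) = P * X * P := by
    rw [← Matrix.mul_assoc, ← Matrix.mul_assoc, hPP]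
  have h := trace_mul_nonneg_of_posSemidef hgap hpsd
  rw [sub_mul, trace_sub, hHY, hPY, zero_sub, neg_nonneg] at h
  exact hpsd.trace_eq_zero_iff.mp (le_antisymm h hpsd.trace_nonneg)

end
end

section
/- Let n ≥ 2. On the n-qubit space, the following operator identity holds: ∑_{1 ≤ i < j ≤ n} Π⁻_{ij} = (n(n+2)/8)·1 − (1/2)·(J_x² + J_y² + J_z²), where Π⁻_{ij} := (1 − SWAP_{ij})/2 and J_γ := (1/2)·∑_{i=1}^n γ_i for γ ∈ {x, y, z}. -/
/-!
The identity is the exchange form of the Heisenberg interaction: writing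
`D i j = X_i X_j + Y_i Y_j + Z_i Z_j`, one has `D i j = 2 SWAP_{ij} - 1` for `i ≠ j` and
`D i i = 3`. Since `Π⁻_{ii} = 0`, both cases read `D i j = 1 - 4 Π⁻_{ij} + 2 δ_{ij}`
(`pauli_dot_eq`). Summing over all ordered pairs, the left side is `4 (J_x² + J_y² + J_z²)`, while
the right side is `n² + 2n - 8 ∑_{i<j} Π⁻_{ij}`, because `Π⁻` is symmetric in its two sites
(`sum_sum_piMinus`).

The formula for `D i j` is checked on matrix entries. The row of `D i j` at the bitstring `f` is
supported on `f` and on `f` with both bits flipped; if `f i = f j` the contributions of `X X` and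
`Y Y` cancel, and if `f i ≠ f j` they add up to `2`, flipping both bits then being the same as
exchanging them.
-/


open Matrix BigOperators
open scoped ComplexOrder

noncomputable section

/-- The space of `n`-qubit operators. -/
abbrev QOp (n : ℕ) := Matrix ((Fin n) → Fin 2) ((Fin n) → Fin 2) ℂ

/-- Flip a bit. -/
def flipBit (b : Fin 2) : Fin 2 := if b = 0 then 1 else 0

/-- The Pauli-X operator on site `i`. -/
def pauliX {n : ℕ} (i : Fin n) : QOp n := fun f f' =>
  if f' = Function.update f i (flipBit (f i)) then 1 else 0

/-- The Pauli-Y operator on site `i`. -/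
def pauliY {n : ℕ} (i : Fin n) : QOp n := fun f f' =>
  if f' = Function.update f i (flipBit (f i)) then
    (if f i = 0 then -Complex.I else Complex.I) else 0

/-- The Pauli-Z operator on site `i`. -/
def pauliZ {n : ℕ} (i : Fin n) : QOp n := fun f f' =>
  if f = f' then (-1 : ℂ) ^ ((f i : ℕ)) else 0

/-- The SWAP operator exchanging sites `i` and `j`. -/
def swapOp {n : ℕ} (i j : Fin n) : QOp n := fun f f' =>
  if f' = f ∘ (Equiv.swap i j) then 1 else 0

/-- The projector onto the antisymmetric subspace of the pair `(i, j)`. -/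
def piMinus {n : ℕ} (i j : Fin n) : QOp n :=
  (2⁻¹ : ℂ) • ((1 : QOp n) - swapOp i j)

/-- The collective angular momentum operators `J_γ = (1/2) ∑ᵢ γᵢ`. -/
def Jx (n : ℕ) : QOp n := (2⁻¹ : ℂ) • ∑ i : Fin n, pauliX i
def Jy (n : ℕ) : QOp n := (2⁻¹ : ℂ) • ∑ i : Fin n, pauliY i
def Jz (n : ℕ) : QOp n := (2⁻¹ : ℂ) • ∑ i : Fin n, pauliZ i

/-- A Pauli-X factor on the left moves to the row with bit `i` flipped. -/
lemma pauliX_mul_apply {n : ℕ} (i : Fin n) (M : QOp n) (f g : Fin n → Fin 2) :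
    (pauliX i * M) f g = M (Function.update f i (flipBit (f i))) g := by
  simp [Matrix.mul_apply, pauliX]

lemma pauliY_mul_apply {n : ℕ} (i : Fin n) (M : QOp n) (f g : Fin n → Fin 2) :
    (pauliY i * M) f g =
      (if f i = 0 then -Complex.I else Complex.I) *
        M (Function.update f i (flipBit (f i))) g := by
  simp only [Matrix.mul_apply, pauliY]
  rw [Finset.sum_eq_single (Function.update f i (flipBit (f i)))]
  · simp
  · intro b _ hb
    simp [hb]
  · simp

lemma pauliZ_mul_apply {n : ℕ} (i : Fin n) (M : QOp n) (f g : Fin n → Fin 2) :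
    (pauliZ i * M) f g = (-1 : ℂ) ^ (f i : ℕ) * M f g := by
  simp [Matrix.mul_apply, pauliZ]

lemma comp_swap_of_eq {n : ℕ} {i j : Fin n} {f : Fin n → Fin 2} (h : f i = f j) :
    f ∘ Equiv.swap i j = f := by
  funext k
  simp only [Function.comp_apply, Equiv.swap_apply_def]
  split_ifs with h1 h2
  · rw [h1, h]
  · rw [h2, h]
  · rfl

/-- Two differing bits are exchanged by flipping both of them. -/
lemma comp_swap_of_ne {n : ℕ} {i j : Fin n} {f : Fin n → Fin 2} (h : f i ≠ f j) :
    f ∘ Equiv.swap i j =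
      Function.update (Function.update f i (flipBit (f i))) j (flipBit (f j)) := by
  have flip : ∀ a b : Fin 2, a ≠ b → flipBit a = b := by decide
  funext k
  simp only [Function.comp_apply, Equiv.swap_apply_def, Function.update_apply, flip _ _ h,
    flip _ _ h.symm]
  split_ifs with h1 h2 <;> simp_all

lemma piMinus_self {n : ℕ} (i : Fin n) : piMinus i i = 0 := by
  have : swapOp i i = (1 : QOp n) := by
    ext f g
    simp [swapOp, Matrix.one_apply, eq_comm]
  simp [piMinus, this]

lemma piMinus_comm {n : ℕ} (i j : Fin n) : piMinus i j = piMinus j i := by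
  unfold piMinus swapOp
  rw [Equiv.swap_comm]

/-- The Heisenberg exchange identity, with the diagonal case `i = j` included. -/
lemma pauli_dot_eq {n : ℕ} (i j : Fin n) :
    pauliX i * pauliX j + pauliY i * pauliY j + pauliZ i * pauliZ j =
      (1 : QOp n) - (4 : ℂ) • piMinus i j + if i = j then (2 : ℂ) • (1 : QOp n) else 0 := by
  have two : ∀ a : Fin 2, a = 0 ∨ a = 1 := by decide
  by_cases hij : i = j
  · subst hij
    rw [piMinus_self]
    ext f g
    have hff : flipBit (flipBit (f i)) = f i := by
      rcases two (f i) with h | h <;> simp [h, flipBit]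
    simp only [Matrix.add_apply, pauliX_mul_apply, pauliY_mul_apply, pauliZ_mul_apply, pauliX,
      pauliY, pauliZ, Function.update_self, Function.update_idem, hff, Function.update_eq_self]
    by_cases hfg : f = g
    · subst hfg
      rcases two (f i) with h | h <;> simp [h, flipBit] <;> norm_num
    · simp [hfg, Ne.symm hfg]
  · ext f g
    simp only [if_neg hij, Matrix.add_apply, pauliX_mul_apply, pauliY_mul_apply,
      pauliZ_mul_apply, pauliX, pauliY, pauliZ, Function.update_of_ne (Ne.symm hij), piMinus,
      Matrix.sub_apply, Matrix.smul_apply, swapOp, Matrix.one_apply, Matrix.zero_apply,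
      smul_eq_mul]
    by_cases h : f i = f j
    · rw [comp_swap_of_eq h, h]
      by_cases hfg : f = g
      · subst hfg
        rcases two (f j) with h' | h' <;> simp [h'] <;> split_ifs <;> simp
      · rcases two (f j) with h' | h' <;> simp [h', hfg, Ne.symm hfg] <;> split_ifs <;> simp
    · rw [comp_swap_of_ne h]
      have hsign : (-1 : ℂ) ^ (f i : ℕ) * (-1 : ℂ) ^ (f j : ℕ) = -1 := by
        rcases two (f i) with h1 | h1 <;> rcases two (f j) with h2 | h2 <;> simp_all
      have hphase : (if f i = 0 then -Complex.I else Complex.I) *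
          (if f j = 0 then -Complex.I else Complex.I) = 1 := by
        rcases two (f i) with h1 | h1 <;> rcases two (f j) with h2 | h2 <;> simp_all
      by_cases hg : g = Function.update (Function.update f i (flipBit (f i))) j (flipBit (f j)) <;>
        by_cases hfg : f = g
      · simp only [if_pos hg, if_pos hfg]
        linear_combination hphase + hsign
      · simp only [if_pos hg, if_neg hfg]
        linear_combination hphase
      · simp only [if_neg hg, if_pos hfg]
        linear_combination hsign
      · simp only [if_neg hg, if_neg hfg]
        ring

/-- Each unordered pair of sites is counted twice, and the diagonal vanishes. -/
lemma sum_sum_piMinus (n : ℕ) :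
    ∑ i : Fin n, ∑ j : Fin n, piMinus i j =
      (2 : ℂ) • ∑ i : Fin n, ∑ j ∈ Finset.univ.filter (fun j => i < j), piMinus i j := by
  have hsplit : ∀ i j : Fin n, piMinus i j =
      (if i < j then piMinus i j else 0) + (if j < i then piMinus j i else 0) := by
    intro i j
    rcases lt_trichotomy i j with h | h | h
    · simp [h, h.not_gt]
    · subst h
      simp [piMinus_self]
    · simp [h, h.not_gt, piMinus_comm i j]
  simp only [Finset.sum_filter]
  rw [Finset.sum_congr rfl fun i _ => Finset.sum_congr rfl fun j _ => hsplit i j]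
  simp only [Finset.sum_add_distrib]
  rw [Finset.sum_comm (f := fun i j : Fin n => if j < i then piMinus j i else 0), two_smul]

/-- **Operator identity:**
`∑_{i<j} Π⁻_{ij} = (n(n+2)/8)·1 − (1/2)·J²`. -/
theorem sum_piMinus_eq {n : ℕ} (hn : 2 ≤ n) :
    (∑ i : Fin n, ∑ j ∈ Finset.univ.filter (fun j => i < j), piMinus i j) =
      (((n : ℂ) * ((n : ℂ) + 2)) / 8) • (1 : QOp n) -
        (2⁻¹ : ℂ) • (Jx n ^ 2 + Jy n ^ 2 + Jz n ^ 2) := by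
  have hJ : Jx n ^ 2 + Jy n ^ 2 + Jz n ^ 2 = (4⁻¹ : ℂ) • ∑ i : Fin n, ∑ j : Fin n,
      (pauliX i * pauliX j + pauliY i * pauliY j + pauliZ i * pauliZ j) := by
    simp only [Jx, Jy, Jz, sq, smul_mul_smul_comm, Finset.sum_mul_sum, ← smul_add,
      ← Finset.sum_add_distrib]
    norm_num
  rw [hJ]
  simp only [pauli_dot_eq, Finset.sum_add_distrib, Finset.sum_sub_distrib, ← Finset.smul_sum,
    sum_sum_piMinus, Finset.sum_ite_eq, Finset.mem_univ, if_true, Finset.sum_const,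
    Finset.card_univ, Fintype.card_fin, ← Nat.cast_smul_eq_nsmul ℂ]
  module

end
end

section
/- Let d ≥ 1 and let ρ ∈ Matrix (Fin d) (Fin d) ℂ be a Hermitian matrix of rank r with 1 ≤ r ≤ d. Consider the set L of matrices X ∈ Matrix (Fin d) (Fin d) ℂ such that X is Hermitian (Xᴴ = X), trace X = 0, and star v ⬝ᵥ X.mulVec w = 0 for all vectors v, w with ρ.mulVec v = 0 and ρ.mulVec w = 0. Then L is a real-linear subspace of Matrix (Fin d) (Fin d) ℂ (viewed as a vector space over ℝ) whose real dimension equals (r² − 1) + 2·r·(d − r). -/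
/-!
Diagonalise `ρ = U D Uᴴ` with `D` real diagonal. In the eigenbasis, `Y = Uᴴ X U` is Hermitian and
traceless, and the compression condition says exactly that `Y i j = 0` whenever `i` and `j` both
index a zero eigenvalue (`compression_iff`). A Hermitian matrix `Y` is encoded without redundancy by
the real matrix `G = Re Y + Im Y`, because `Re Y` is the symmetric part of `G` and `Im Y` its
antisymmetric part; this encoding preserves the trace and every symmetric pattern of zeros. So the
space in question is isomorphic to the kernel of the trace on real matrices supported off the
zero-eigenvalue block; such matrices have `d² - (d - r)²` free entries. As `r ≥ 1` the trace is a nonzero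
functional there, and the dimension is `d² - (d - r)² - 1 = (r² - 1) + 2r(d - r)`.
-/

open Matrix BigOperators

noncomputable section

namespace FlatDirections

variable {n : Type*}

/-- The positions outside the square block `{i | l i = 0} × {i | l i = 0}`. -/
abbrev Pos (l : n → ℝ) : Type _ := {p : n × n // ¬(l p.1 = 0 ∧ l p.2 = 0)}

/-- Extension by zero of a family of real numbers on `Pos l` to all positions. -/
def extZero (l : n → ℝ) (G : Pos l → ℝ) (i j : n) : ℝ :=
  if h : l i = 0 ∧ l j = 0 then 0 else G ⟨(i, j), h⟩

lemma extZero_add (l : n → ℝ) (G H : Pos l → ℝ) (i j : n) :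
    extZero l (G + H) i j = extZero l G i j + extZero l H i j := by
  unfold extZero; split_ifs <;> simp

lemma extZero_smul (l : n → ℝ) (c : ℝ) (G : Pos l → ℝ) (i j : n) :
    extZero l (c • G) i j = c * extZero l G i j := by
  unfold extZero; split_ifs <;> simp

/-- The Hermitian matrix `Y` with `Re Y + Im Y = G` entrywise: its real part is the symmetric part
of `G`, its imaginary part the antisymmetric part. -/
def herm (l : n → ℝ) : (Pos l → ℝ) →ₗ[ℝ] Matrix n n ℂ where
  toFun G := Matrix.of fun i j =>
    ⟨(extZero l G i j + extZero l G j i) / 2, (extZero l G i j - extZero l G j i) / 2⟩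
  map_add' G H := by
    ext i j
    apply Complex.ext <;> simp [extZero_add] <;> ring
  map_smul' c G := by
    ext i j
    apply Complex.ext <;> simp [extZero_smul] <;> ring

/-- The trace of `herm l G`, as a real functional of `G`. -/
def tr [Fintype n] (l : n → ℝ) : (Pos l → ℝ) →ₗ[ℝ] ℝ where
  toFun G := ∑ i, extZero l G i i
  map_add' G H := by
    rw [← Finset.sum_add_distrib]
    exact Finset.sum_congr rfl fun i _ => extZero_add l G H i i
  map_smul' c G := by
    rw [RingHom.id_apply, smul_eq_mul, Finset.mul_sum]
    exact Finset.sum_congr rfl fun i _ => extZero_smul l c G i i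

lemma herm_re_add_im (l : n → ℝ) (G : Pos l → ℝ) (i j : n) :
    (herm l G i j).re + (herm l G i j).im = extZero l G i j := by
  simp [herm]; ring

lemma herm_injective (l : n → ℝ) : Function.Injective (herm l) := by
  intro G H h
  funext ⟨⟨i, j⟩, hp⟩
  have h1 := herm_re_add_im l G i j
  rw [h, herm_re_add_im] at h1
  simpa [extZero, hp] using h1.symm

lemma herm_isHermitian (l : n → ℝ) (G : Pos l → ℝ) : (herm l G)ᴴ = herm l G := by
  ext i j
  apply Complex.ext <;> simp [herm] <;> ring

lemma herm_trace [Fintype n] (l : n → ℝ) (G : Pos l → ℝ) : (herm l G).trace = (tr l G : ℂ) := by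
  simp only [Matrix.trace, Matrix.diag, tr, LinearMap.coe_mk, AddHom.coe_mk, Complex.ofReal_sum]
  refine Finset.sum_congr rfl fun i _ => ?_
  apply Complex.ext <;> simp [herm]

lemma herm_block (l : n → ℝ) (G : Pos l → ℝ) (i j : n) (hi : l i = 0) (hj : l j = 0) :
    herm l G i j = 0 := by
  apply Complex.ext <;> simp [herm, extZero, hi, hj]

lemma exists_herm (l : n → ℝ) (Y : Matrix n n ℂ) (hY : Yᴴ = Y)
    (h0 : ∀ i j, l i = 0 → l j = 0 → Y i j = 0) : ∃ G, herm l G = Y := by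
  refine ⟨fun p => (Y p.1.1 p.1.2).re + (Y p.1.1 p.1.2).im, ?_⟩
  have he : ∀ i j, extZero l (fun p => (Y p.1.1 p.1.2).re + (Y p.1.1 p.1.2).im) i j
      = (Y i j).re + (Y i j).im := by
    intro i j
    unfold extZero
    split_ifs with h
    · simp [h0 i j h.1 h.2]
    · rfl
  ext i j
  have hs : Y j i = star (Y i j) := by
    conv_lhs => rw [← hY]
    rfl
  apply Complex.ext <;> simp [herm, he, hs] <;> ring

lemma card_pos [Fintype n] (l : n → ℝ) :
    Fintype.card (Pos l) + Fintype.card {i // l i = 0} ^ 2 = Fintype.card n ^ 2 := by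
  have h1 : Fintype.card {p : n × n // l p.1 = 0 ∧ l p.2 = 0}
      = Fintype.card {i // l i = 0} ^ 2 := by
    rw [sq, ← Fintype.card_prod]
    exact Fintype.card_congr (Equiv.subtypeProdEquivProd (p := fun i => l i = 0)
      (q := fun i => l i = 0))
  have h2 := Fintype.card_subtype_compl (fun p : n × n => l p.1 = 0 ∧ l p.2 = 0)
  have h3 := Fintype.card_subtype_le (fun p : n × n => l p.1 = 0 ∧ l p.2 = 0)
  rw [Fintype.card_prod, ← sq] at h2 h3
  rw [← h1, h2]
  omega

lemma finrank_ker_tr [Fintype n] [DecidableEq n] (l : n → ℝ) (i : n) (hi : l i ≠ 0) :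
    Module.finrank ℝ (LinearMap.ker (tr l)) + 1 = Fintype.card (Pos l) := by
  have hne : tr l ≠ 0 := by
    intro h
    have h1 := LinearMap.congr_fun h (Pi.single ⟨(i, i), fun h => hi h.1⟩ 1)
    have h2 : tr l (Pi.single ⟨(i, i), fun h => hi h.1⟩ 1) = 1 := by
      change ∑ k, extZero l _ k k = 1
      rw [Finset.sum_eq_single i]
      · simp [extZero, hi]
      · intro k _ hk
        simp [extZero, hk]
      · simp
    rw [h2] at h1
    simp at h1
  have := Module.Dual.finrank_ker_add_one_of_ne_zero (f := tr l) hne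
  simpa using this

/-- Read in the eigenbasis `U`, the vanishing of the compression to `ker ρ` is the vanishing of the
block indexed by the zero eigenvalues. -/
lemma compression_iff [Fintype n] [DecidableEq n] (l : n → ℝ) (U ρ X : Matrix n n ℂ)
    (hU : Uᴴ * U = 1) (hU' : U * Uᴴ = 1)
    (hρ : ρ = U * diagonal (fun i => (l i : ℂ)) * Uᴴ) :
    (∀ v w : n → ℂ, ρ *ᵥ v = 0 → ρ *ᵥ w = 0 → star v ⬝ᵥ X *ᵥ w = 0) ↔
      ∀ i j, l i = 0 → l j = 0 → (Uᴴ * X * U) i j = 0 := by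
  have key : ∀ a b : n → ℂ,
      star (U *ᵥ a) ⬝ᵥ X *ᵥ (U *ᵥ b) = star a ⬝ᵥ (Uᴴ * X * U) *ᵥ b := by
    intro a b
    rw [star_mulVec, ← dotProduct_mulVec, mulVec_mulVec, mulVec_mulVec, Matrix.mul_assoc]
  have hker : ∀ a : n → ℂ, ρ *ᵥ (U *ᵥ a) = 0 ↔ ∀ i, l i = 0 ∨ a i = 0 := by
    intro a
    have h1 : ρ *ᵥ (U *ᵥ a) = U *ᵥ (diagonal (fun i => (l i : ℂ)) *ᵥ a) := by
      rw [hρ, mulVec_mulVec, Matrix.mul_assoc, hU, Matrix.mul_one, mulVec_mulVec]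
    have h2 : ρ *ᵥ (U *ᵥ a) = 0 ↔ diagonal (fun i => (l i : ℂ)) *ᵥ a = 0 := by
      rw [h1]
      constructor
      · intro h
        have := congrArg (fun x => Uᴴ *ᵥ x) h
        simpa only [mulVec_mulVec, ← Matrix.mul_assoc, hU, Matrix.one_mul, mulVec_zero] using this
      · intro h
        rw [h, mulVec_zero]
    rw [h2, funext_iff]
    simp [mulVec_diagonal]
  constructor
  · intro h i j hi hj
    have := h (U *ᵥ Pi.single i 1) (U *ᵥ Pi.single j 1)
      ((hker _).2 fun k => by
        by_cases hk : k = i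
        · left; rw [hk, hi]
        · right; simp [hk])
      ((hker _).2 fun k => by
        by_cases hk : k = j
        · left; rw [hk, hj]
        · right; simp [hk])
    rw [key] at this
    simpa [Pi.star_single] using this
  · intro h v w hv hw
    have hrec : ∀ v : n → ℂ, U *ᵥ (Uᴴ *ᵥ v) = v := fun v => by
      rw [mulVec_mulVec, hU', one_mulVec]
    rw [← hrec v] at hv ⊢
    rw [← hrec w] at hw ⊢
    rw [key]
    rw [hker] at hv hw
    rw [dotProduct]
    refine Finset.sum_eq_zero fun i _ => ?_
    rcases hv i with hi | hi
    · rw [mulVec, dotProduct, Finset.sum_eq_zero, mul_zero]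
      intro j _
      rcases hw j with hj | hj
      · rw [h i j hi hj, zero_mul]
      · rw [hj, mul_zero]
    · simp only [Pi.star_apply, hi, star_zero, zero_mul]

end FlatDirections

open FlatDirections in
/-- **Dimension count of the flat directions:** for a Hermitian matrix `ρ` of
rank `r`, the traceless Hermitian matrices whose compression to the kernel of
`ρ` vanishes form a real subspace of dimension `(r² − 1) + 2r(d − r)`. -/
theorem flat_directions_finrank {d : ℕ} (hd : 1 ≤ d)
    (ρ : Matrix (Fin d) (Fin d) ℂ) (hρ : ρ.IsHermitian)
    (r : ℕ) (hr : r = ρ.rank) (hr1 : 1 ≤ r) (hrd : r ≤ d) :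
    ∃ L : Submodule ℝ (Matrix (Fin d) (Fin d) ℂ),
      (L : Set (Matrix (Fin d) (Fin d) ℂ)) =
        {X : Matrix (Fin d) (Fin d) ℂ | Xᴴ = X ∧ X.trace = 0 ∧
          ∀ v w : Fin d → ℂ, ρ.mulVec v = 0 → ρ.mulVec w = 0 →
            star v ⬝ᵥ X.mulVec w = 0} ∧
      Module.finrank ℝ L = (r ^ 2 - 1) + 2 * r * (d - r) := by
  obtain ⟨U, hU, hU', hdiag⟩ : ∃ U : Matrix (Fin d) (Fin d) ℂ, Uᴴ * U = 1 ∧ U * Uᴴ = 1 ∧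
      ρ = U * diagonal (fun i => (hρ.eigenvalues i : ℂ)) * Uᴴ := by
    refine ⟨hρ.eigenvectorUnitary, ?_, ?_, ?_⟩
    · exact Unitary.coe_star_mul_self hρ.eigenvectorUnitary
    · exact Unitary.coe_mul_star_self hρ.eigenvectorUnitary
    · exact hρ.spectral_theorem
  set l := hρ.eigenvalues with hl
  have hrank : r = Fintype.card {i // l i ≠ 0} := by
    rw [hr, hρ.rank_eq_card_non_zero_eigs]
  -- Conjugation by `U`, which carries eigenbasis coordinates back to the standard basis.
  let C : Matrix (Fin d) (Fin d) ℂ →ₗ[ℝ] Matrix (Fin d) (Fin d) ℂ :=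
    { toFun := fun Y => U * Y * Uᴴ
      map_add' := fun Y Z => by rw [Matrix.mul_add, Matrix.add_mul]
      map_smul' := fun c Y => by simp }
  have hC : ∀ Y, C Y = U * Y * Uᴴ := fun _ => rfl
  have hCinv : ∀ Y, Uᴴ * C Y * U = Y := fun Y => by
    rw [hC, Matrix.mul_assoc, Matrix.mul_assoc, hU, Matrix.mul_one, ← Matrix.mul_assoc, hU,
      Matrix.one_mul]
  have hCinv' : ∀ X, C (Uᴴ * X * U) = X := fun X => by
    rw [hC, Matrix.mul_assoc, Matrix.mul_assoc, hU', Matrix.mul_one, ← Matrix.mul_assoc, hU',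
      Matrix.one_mul]
  have hCtr : ∀ Y, (C Y).trace = Y.trace := fun Y => by
    rw [hC, Matrix.trace_mul_comm, ← Matrix.mul_assoc, hU, Matrix.one_mul]
  have hinj : Function.Injective (C ∘ₗ herm l) := by
    intro G H h
    apply herm_injective l
    rw [← hCinv (herm l G), ← hCinv (herm l H)]
    exact congrArg (fun Z => Uᴴ * Z * U) h
  refine ⟨(LinearMap.ker (tr l)).map (C ∘ₗ herm l), ?_, ?_⟩
  · ext X
    simp only [SetLike.mem_coe, Submodule.mem_map, LinearMap.mem_ker, Set.mem_ofPred_eq,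
      LinearMap.comp_apply]
    rw [compression_iff l U ρ X hU hU' hdiag]
    constructor
    · rintro ⟨G, hG, rfl⟩
      refine ⟨?_, ?_, ?_⟩
      · rw [hC, conjTranspose_mul, conjTranspose_mul, herm_isHermitian, conjTranspose_conjTranspose,
          Matrix.mul_assoc]
      · rw [hCtr, herm_trace, hG, Complex.ofReal_zero]
      · intro i j hi hj
        rw [hCinv]
        exact herm_block l G i j hi hj
    · rintro ⟨hX, htr, hb⟩
      obtain ⟨G, hG⟩ := exists_herm l (Uᴴ * X * U) (by
        rw [conjTranspose_mul, conjTranspose_mul, hX, conjTranspose_conjTranspose,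
          Matrix.mul_assoc]) hb
      refine ⟨G, ?_, by rw [hG, hCinv']⟩
      have h1 := herm_trace l G
      rw [hG, ← hCtr, hCinv', htr] at h1
      exact_mod_cast h1.symm
  · rw [← (Submodule.equivMapOfInjective _ hinj _).finrank_eq]
    obtain ⟨i, hi⟩ : Nonempty {i // l i ≠ 0} := by
      rw [← Fintype.card_pos_iff]; omega
    have h1 := finrank_ker_tr l i hi
    have h2 := card_pos l
    have h3 : Fintype.card {i // l i ≠ 0} = d - Fintype.card {i // l i = 0} := by
      simpa using Fintype.card_subtype_compl (fun i => l i = 0)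
    have h4 : Fintype.card {i // l i = 0} ≤ d := by
      simpa using Fintype.card_subtype_le (fun i => l i = 0)
    rw [Fintype.card_fin] at h2
    generalize Fintype.card {i // l i = 0} = z at *
    obtain rfl : d = r + z := by omega
    rw [Nat.add_sub_cancel_left]
    have h5 : 1 ≤ r ^ 2 := Nat.one_le_pow _ _ hr1
    have h6 : (r + z) ^ 2 = r ^ 2 + 2 * r * z + z ^ 2 := by ring
    omega

end
end
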